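/- arXiv:math/9812171 — 4 statements merged into one kernel-verified Lean document; each statement's English description precedes it below -/
import Mathlib

section
/- Let φ : ℤ^a → ℤ^b be a ℤ-linear map, let Q be the cokernel of φ, and let I be a subset of {1,...,a} such that the images φ(e_i) for i ∈ I of the standard basis vectors form a basis of the real span of the image of φ. Then the cardinality of the torsion subgroup of Q is at most the product over i ∈ I of the Euclidean norms ‖φ(e_i)‖. -/
open scoped BigOperators
open Matrix

lemma gram_det_le {n : ℕ} {E : Type*} [NormedAddCommGroup E] [InnerProductSpace ℝ E]
    (v : Fin n → E) (hv : LinearIndependent ℝ v) :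
    (Matrix.gram ℝ v).det ≤ (∏ i, ‖v i‖) ^ 2 := by
  let V := Submodule.span ℝ (Set.range v)
  let w : Fin n → V := fun i => ⟨v i, Submodule.subset_span ⟨i, rfl⟩⟩
  have hn : Module.finrank ℝ V = n := by
    have := finrank_span_eq_card hv
    simpa using this
  have : FiniteDimensional ℝ V := FiniteDimensional.span_of_finite ℝ (Set.finite_range v)
  have : Fact (Module.finrank ℝ V = n) := ⟨hn⟩
  let ob : OrthonormalBasis (Fin n) ℝ V := (stdOrthonormalBasis ℝ V).reindex (finCongr hn)
  have h1 := ob.toBasis.orientation.abs_volumeForm_apply_le w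
  have h2 : (Matrix.gram ℝ v) = (ob.toBasis.toMatrix w)ᵀ * ob.toBasis.toMatrix w := by
    ext i j
    have := ob.sum_inner_mul_inner (w i) (w j)
    simp only [Matrix.gram_apply, Matrix.mul_apply, Matrix.transpose_apply, Module.Basis.toMatrix_apply]
    change inner ℝ (w i) (w j) = _
    rw [← this]
    refine Finset.sum_congr rfl fun k _ => ?_
    simp [ob.repr_apply_apply, real_inner_comm]
  rw [ob.toBasis.orientation.volumeForm_robust ob rfl] at h1
  rw [h2, Matrix.det_mul, Matrix.det_transpose, ← sq, ← sq_abs]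
  exact pow_le_pow_left₀ (abs_nonneg _) h1 2

lemma gram_det_le' {ι : Type*} [Fintype ι] [DecidableEq ι] {E : Type*} [NormedAddCommGroup E]
    [InnerProductSpace ℝ E]
    (v : ι → E) (hv : LinearIndependent ℝ v) :
    (Matrix.gram ℝ v).det ≤ (∏ i, ‖v i‖) ^ 2 := by
  let e := Fintype.equivFin ι
  have := gram_det_le (v ∘ e.symm) (hv.comp _ e.symm.injective)
  rw [← Matrix.det_submatrix_equiv_self e.symm, ← e.symm.prod_comp]
  exact this

lemma rank_eq {S ι : Type*} [AddCommGroup S] [Module.Free ℤ S] [Module.Finite ℤ S] [Fintype ι]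
    (w : ι → S) (hw : LinearIndependent ℤ w)
    (ht : ∀ x : S, ∃ n : ℤ, n ≠ 0 ∧ n • x ∈ Submodule.span ℤ (Set.range w)) :
    Module.finrank ℤ S = Fintype.card ι := by
  rw [← finrank_span_eq_card hw, ← Submodule.finrank_quotient_add_finrank (Submodule.span ℤ (Set.range w))]
  have : Module.finrank ℤ (S ⧸ Submodule.span ℤ (Set.range w)) = 0 := by
    rw [Module.finrank_eq_zero_iff_isTorsion]
    intro x
    obtain ⟨x, rfl⟩ := Submodule.Quotient.mk_surjective _ x
    obtain ⟨n, hn, h⟩ := ht x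
    refine ⟨⟨n, mem_nonZeroDivisors_of_ne_zero hn⟩, ?_⟩
    change n • (Submodule.Quotient.mk x : S ⧸ Submodule.span ℤ (Set.range w)) = 0
    rw [← Submodule.Quotient.mk_smul, Submodule.Quotient.mk_eq_zero]; exact h
  omega

abbrev rowE {ι : Type*} {b : ℕ} (A : Matrix ι (Fin b) ℤ) (i : ι) : EuclideanSpace ℝ (Fin b) :=
  WithLp.toLp 2 (fun j => (A i j : ℝ))

lemma gram_cast {ι : Type*} [Fintype ι] [DecidableEq ι] {b : ℕ} (A : Matrix ι (Fin b) ℤ) :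
    (((A * Aᵀ).det : ℤ) : ℝ) = (Matrix.gram ℝ (rowE A)).det := by
  rw [Int.cast_det]
  congr 1
  ext i j
  simp [Matrix.mul_apply, rowE, PiLp.inner_apply, mul_comm]

lemma rowE_indep {ι : Type*} {b : ℕ} (A : Matrix ι (Fin b) ℤ)
    (hA : LinearIndependent ℝ (fun i => (fun j => (A i j : ℝ) : Fin b → ℝ))) :
    LinearIndependent ℝ (rowE A) := by
  have := hA.map' (WithLp.linearEquiv 2 ℝ (Fin b → ℝ)).symm.toLinearMap (LinearEquiv.ker _)
  exact this

lemma smul_mem {ι : Type*} [Fintype ι] [DecidableEq ι] {b : ℕ} (A : Matrix ι (Fin b) ℤ)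
    (y : Fin b → ℤ)
    (hy : (fun j => (y j : ℝ)) ∈ Submodule.span ℝ
      (Set.range (fun i => (fun j => (A i j : ℝ) : Fin b → ℝ)))) :
    (A * Aᵀ).det • y ∈ Submodule.span ℤ (Set.range (fun i => A i)) := by
  obtain ⟨c, hc⟩ := (Submodule.mem_span_range_iff_exists_fun ℝ).1 hy
  have key : (A * Aᵀ).det • y = ((y ᵥ* Aᵀ) ᵥ* (A * Aᵀ).adjugate) ᵥ* A := by
    let f := Int.castRingHom ℝ
    have hc' : (f ∘ y) = c ᵥ* (A.map f) := by
      ext j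
      have := congrFun hc j
      simp [Matrix.vecMul, dotProduct] at this ⊢
      exact this.symm
    have inj : Function.Injective (fun z : Fin b → ℤ => f ∘ z) :=
      fun z z' h => funext fun j => Int.cast_injective (α := ℝ) (congrFun h j)
    apply inj
    have e1 : f ∘ (((y ᵥ* Aᵀ) ᵥ* (A * Aᵀ).adjugate) ᵥ* A) =
        ((((f ∘ y) ᵥ* (A.map f)ᵀ) ᵥ* ((A.map f) * (A.map f)ᵀ).adjugate) ᵥ* (A.map f)) := by
      have : ((A.map f) * (A.map f)ᵀ).adjugate = (A * Aᵀ).adjugate.map f := by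
        have := RingHom.map_adjugate f (A * Aᵀ)
        rw [← RingHom.mapMatrix_apply, this, RingHom.mapMatrix_apply, Matrix.map_mul, Matrix.transpose_map]
      rw [this]
      have hv1 : f ∘ (y ᵥ* Aᵀ) = (f ∘ y) ᵥ* (A.map f)ᵀ := by
        ext j
        exact RingHom.map_vecMul f Aᵀ y j
      have hv2 : f ∘ ((y ᵥ* Aᵀ) ᵥ* (A * Aᵀ).adjugate) =
          (f ∘ (y ᵥ* Aᵀ)) ᵥ* ((A * Aᵀ).adjugate.map f) := by
        ext j
        exact RingHom.map_vecMul f _ _ j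
      rw [← hv1, ← hv2]
      ext j
      exact RingHom.map_vecMul f _ _ j
    have e2 : f ∘ ((A * Aᵀ).det • y) = ((A.map f) * (A.map f)ᵀ).det • (f ∘ y) := by
      have : ((A.map f) * (A.map f)ᵀ).det = f (A * Aᵀ).det := by
        rw [RingHom.map_det, RingHom.mapMatrix_apply, Matrix.map_mul, Matrix.transpose_map]
      rw [this]
      ext j
      simp
    change f ∘ _ = f ∘ _
    rw [e1, e2, hc']
    simp only [Matrix.vecMul_vecMul]
    rw [Matrix.mul_adjugate]
    simp [Matrix.vecMul_smul]
  rw [key]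
  exact (Submodule.mem_span_range_iff_exists_fun ℤ).2
    ⟨_, by rw [Matrix.vecMul_eq_sum]⟩

lemma card_le {ι : Type*} [Fintype ι] [DecidableEq ι] {b : ℕ} (A : Matrix ι (Fin b) ℤ)
    (hA : LinearIndependent ℝ (fun i => (fun j => (A i j : ℝ) : Fin b → ℝ)))
    (S : Submodule ℤ (Fin b → ℤ)) (w : ι → S) (hw : ∀ i, (w i : Fin b → ℤ) = A i)
    (ht : ∀ x : S, ∃ n : ℤ, n ≠ 0 ∧ n • x ∈ Submodule.span ℤ (Set.range w)) :
    Nat.card (S ⧸ Submodule.span ℤ (Set.range w)) ≠ 0 ∧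
    (Nat.card (S ⧸ Submodule.span ℤ (Set.range w)) : ℝ) ≤ ∏ i, ‖rowE A i‖ := by
  have hE := rowE_indep A hA
  have hG : (0 : ℝ) < (((A * Aᵀ).det : ℤ) : ℝ) := by
    rw [gram_cast]
    exact (Matrix.posDef_gram_of_linearIndependent hE).det_pos
  have hwi : LinearIndependent ℤ w := by
    rw [Fintype.linearIndependent_iff] at hA ⊢
    intro g hg i
    have := hA (fun i => (g i : ℝ)) (by
      ext j
      have h := congrArg (fun s : S => (((s : Fin b → ℤ) j : ℤ) : ℝ)) hg
      simpa [hw, Submodule.coe_sum] using h) i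
    exact_mod_cast this
  have hr := rank_eq w hwi ht
  let bS : Module.Basis ι ℤ S := (Module.finBasisOfFinrankEq ℤ S hr).reindex (Fintype.equivFin ι).symm
  let bN := Module.Basis.span hwi
  have hcard := Submodule.natAbs_det_basis_change bS _ bN
  have hbN : (Subtype.val ∘ bN : ι → S) = w := by
    ext i; simp [bN, Module.Basis.span_apply]
  rw [hbN, Module.Basis.det_apply] at hcard
  let B : Matrix ι (Fin b) ℤ := fun i j => (bS i : Fin b → ℤ) j
  have hAB : A = (bS.toMatrix w)ᵀ * B := by
    ext i j
    have h := congrArg (fun s : S => (s : Fin b → ℤ) j) (bS.sum_toMatrix_smul_self w i)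
    simp only [hw] at h
    rw [← h]
    simp [Matrix.mul_apply, B, -Module.Basis.sum_toMatrix_smul_self]
    rfl
  have hdet : (A * Aᵀ).det = (bS.toMatrix w).det ^ 2 * (B * Bᵀ).det := by
    rw [hAB]
    rw [Matrix.transpose_mul, Matrix.transpose_transpose, Matrix.mul_assoc, ← Matrix.mul_assoc B,
      Matrix.det_mul, Matrix.det_mul, Matrix.det_transpose]
    ring
  have hG' : 0 < (A * Aᵀ).det := by exact_mod_cast hG
  have hM : (bS.toMatrix w).det ≠ 0 := by
    intro h; rw [hdet, h] at hG'; simp at hG'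
  have hB : 1 ≤ (B * Bᵀ).det := by
    by_contra h
    have : (B * Bᵀ).det ≤ 0 := by omega
    rw [hdet] at hG'
    nlinarith [sq_nonneg (bS.toMatrix w).det]
  have hle : (bS.toMatrix w).det ^ 2 ≤ (A * Aᵀ).det := by
    rw [hdet]; nlinarith [sq_nonneg (bS.toMatrix w).det]
  refine ⟨by rw [← hcard]; simpa using hM, ?_⟩
  apply le_of_sq_le_sq ?_ (Finset.prod_nonneg fun i _ => norm_nonneg _)
  refine le_trans ?_ (gram_det_le' _ hE)
  rw [← gram_cast, ← hcard]
  have : ((((bS.toMatrix w).det.natAbs : ℤ)) ^ 2) ≤ (A * Aᵀ).det := by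
    simpa using hle
  have h2 : (((((bS.toMatrix w).det.natAbs : ℤ)) ^ 2 : ℤ) : ℝ) ≤ (((A * Aᵀ).det : ℤ) : ℝ) :=
    Int.cast_le.2 this
  rw [Int.cast_pow, Int.cast_natCast] at h2
  exact h2

theorem stmt_0 (a b : ℕ) (ha : 0 < a) (hb : 0 < b)
    (φ : (Fin a → ℤ) →ₗ[ℤ] (Fin b → ℤ))
    (I : Finset (Fin a))
    (hind : LinearIndependent ℝ
      (fun i : I => (fun j => ((φ (Pi.single (i : Fin a) 1)) j : ℝ) : Fin b → ℝ)))
    (hspan : Submodule.span ℝ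
        (Set.range (fun i : I => (fun j => ((φ (Pi.single (i : Fin a) 1)) j : ℝ) : Fin b → ℝ)))
      = Submodule.span ℝ
        ((fun x : Fin b → ℤ => (fun j => (x j : ℝ) : Fin b → ℝ)) '' (LinearMap.range φ))) :
    (Nat.card (Submodule.torsion ℤ ((Fin b → ℤ) ⧸ LinearMap.range φ)) : ℝ)
      ≤ ∏ i ∈ I, Real.sqrt (∑ j, ((φ (Pi.single i 1)) j : ℝ) ^ 2) := by
  let A : Matrix I (Fin b) ℤ := fun i => φ (Pi.single (i : Fin a) 1)
  let T := Submodule.torsion ℤ ((Fin b → ℤ) ⧸ LinearMap.range φ)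
  let S : Submodule ℤ (Fin b → ℤ) := T.comap (LinearMap.range φ).mkQ
  have hLS : ∀ x ∈ LinearMap.range φ, x ∈ S := by
    intro x hx
    change (LinearMap.range φ).mkQ x ∈ T
    have : (LinearMap.range φ).mkQ x = 0 := (Submodule.Quotient.mk_eq_zero _).2 hx
    rw [this]; exact T.zero_mem
  let w : I → S := fun i => ⟨A i, hLS _ ⟨_, rfl⟩⟩
  have hd : (A * Aᵀ).det ≠ 0 := by
    have : (((A * Aᵀ).det : ℤ) : ℝ) ≠ 0 := by
      rw [gram_cast]
      exact (Matrix.posDef_gram_of_linearIndependent (rowE_indep A hind)).det_pos.ne'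
    exact_mod_cast this
  have hmap : (Submodule.span ℤ (Set.range w)).map S.subtype =
      Submodule.span ℤ (Set.range (fun i => A i)) := by
    rw [Submodule.map_span, ← Set.range_comp]; rfl
  have ht : ∀ x : S, ∃ n : ℤ, n ≠ 0 ∧ n • x ∈ Submodule.span ℤ (Set.range w) := by
    rintro ⟨x, hx⟩
    obtain ⟨⟨m, hm⟩, hmx⟩ := (Submodule.mem_torsion_iff _).1 hx
    have hmL : m • x ∈ LinearMap.range φ := (Submodule.Quotient.mk_eq_zero _).1 hmx
    have h1 := smul_mem A (m • x) (by
      have : (fun j => (((m • x) j : ℤ) : ℝ)) ∈ Submodule.span ℝ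
        ((fun x : Fin b → ℤ => (fun j => (x j : ℝ) : Fin b → ℝ)) '' (LinearMap.range φ)) :=
        Submodule.subset_span ⟨_, hmL, rfl⟩
      rw [← hspan] at this
      exact this)
    refine ⟨(A * Aᵀ).det * m, mul_ne_zero hd (nonZeroDivisors.ne_zero hm), ?_⟩
    rw [← hmap] at h1
    obtain ⟨z, hz, hzx⟩ := h1
    have hzz : ((A * Aᵀ).det * m) • (⟨x, hx⟩ : S) = z := by
      apply Subtype.ext
      rw [← smul_smul]
      exact hzx.symm
    rw [hzz]
    exact hz
  obtain ⟨h0, hle⟩ := card_le A hind S w (fun _ => rfl) ht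
  have hfin : Finite (S ⧸ Submodule.span ℤ (Set.range w)) := (Nat.card_ne_zero.1 h0).2
  let g : S →ₗ[ℤ] T := (LinearMap.range φ).mkQ.restrict (fun x hx => hx)
  have hg : Submodule.span ℤ (Set.range w) ≤ LinearMap.ker g := by
    rw [Submodule.span_le]
    rintro _ ⟨i, rfl⟩
    apply Subtype.ext
    exact (Submodule.Quotient.mk_eq_zero _).2 ⟨_, rfl⟩
  have hsurj : Function.Surjective ((Submodule.span ℤ (Set.range w)).liftQ g hg) := by
    rintro ⟨t, htt⟩
    obtain ⟨x, rfl⟩ := Submodule.Quotient.mk_surjective _ t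
    exact ⟨Submodule.Quotient.mk ⟨x, htt⟩, rfl⟩
  have hc := Nat.card_le_card_of_surjective _ hsurj
  calc (Nat.card T : ℝ) ≤ Nat.card (S ⧸ Submodule.span ℤ (Set.range w)) := by exact_mod_cast hc
    _ ≤ _ := hle
    _ = _ := by
      rw [← Finset.prod_coe_sort I]
      refine Finset.prod_congr rfl fun i _ => ?_
      simp [EuclideanSpace.norm_eq, A]
end

section
/- Let N ≥ 2 and define A(N) = N^{N−1} · γ^{N/2}, where γ = γ(N) is the Hermite constant in dimension N. Let A be a positive definite real N×N symmetric matrix with μ(A) = 1 whose set of minimal vectors m(A) spans ℝ^N. Then there exists g ∈ SL_N(ℤ) such that every minimal vector v of gᵀAg has all coordinates bounded in absolute value by A(N). -/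
open scoped Matrix

/-- reduced basis over the integers -/
theorem exists_reduced {N : ℕ} (V : Matrix (Fin N) (Fin N) ℤ) (hd : V.det ≠ 0) :
    ∃ E : Matrix (Fin N) (Fin N) ℤ, IsUnit E.det ∧
      ∀ i j, |(V.adjugate *ᵥ (E.col i)) j| ≤ |V.det| := by
  set d := V.det with hdd
  set f : (Fin N → ℤ) →ₗ[ℤ] (Fin N → ℤ) := V.adjugate.mulVecLin with hf
  have hfv : ∀ y, f (V *ᵥ y) = d • y := by
    intro y
    rw [hf, Matrix.mulVecLin_apply, Matrix.mulVec_mulVec, Matrix.adjugate_mul, Matrix.smul_mulVec,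
      Matrix.one_mulVec]
  have hVf : ∀ x, V *ᵥ f x = d • x := by
    intro y
    rw [hf, Matrix.mulVecLin_apply, Matrix.mulVec_mulVec, Matrix.mul_adjugate, Matrix.smul_mulVec,
      Matrix.one_mulVec]
  have key : ∀ i : Fin N, ∃ e : Fin N → ℤ, (∀ j, |f e j| ≤ |d|) ∧ (∀ j, i < j → f e j = 0) ∧
      ∀ x, (∀ j, i < j → f x j = 0) → f e i ∣ f x i := by
    intro i
    let I : Ideal ℤ := 
      { carrier := {z | ∃ x, (∀ j, i < j → f x j = 0) ∧ f x i = z}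
        add_mem' := by
          rintro a b ⟨x, hx, rfl⟩ ⟨y, hy, rfl⟩
          exact ⟨x + y, fun j hj => by simp [hx j hj, hy j hj], by simp⟩
        zero_mem' := ⟨0, by simp, by simp⟩
        smul_mem' := by
          rintro c a ⟨x, hx, rfl⟩
          exact ⟨c • x, fun j hj => by rw [map_smul, Pi.smul_apply, hx j hj, smul_zero],
            by rw [map_smul, Pi.smul_apply]⟩ }
    obtain ⟨g, hg⟩ := (IsPrincipalIdealRing.principal I).principal
    have hgI : g ∈ I := by rw [hg]; exact Submodule.mem_span_singleton_self g
    obtain ⟨e', he', hei⟩ := hgI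
    have hdiv : ∀ x, (∀ j, i < j → f x j = 0) → g ∣ f x i := by
      intro x hx
      have : f x i ∈ I := ⟨x, hx, rfl⟩
      rw [hg] at this
      exact Ideal.mem_span_singleton.mp this
    let y : Fin N → ℤ := fun j => if j < i then f e' j / d else 0
    have hfe : ∀ j, f (e' - V *ᵥ y) j = f e' j - d * y j := by
      intro j
      rw [map_sub, hfv]; simp
    have hdvd : g ∣ d := by
      have := hdiv (V *ᵥ Pi.single i 1) (by
        intro j hj
        rw [hfv]; simp [hj.ne'])
      rw [hfv] at this
      simpa using this
    have hi : f (e' - V *ᵥ y) i = g := by rw [hfe]; simp [y, hei]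
    refine ⟨e' - V *ᵥ y, ?_, ?_, ?_⟩
    · intro j
      rcases lt_trichotomy j i with h | h | h
      · rw [hfe]
        simp only [y, h, if_true]
        have h1 := Int.emod_nonneg (f e' j) hd
        have h2 := Int.emod_lt_abs (f e' j) hd
        have h3 := Int.emod_add_mul_ediv (f e' j) d
        rw [abs_of_nonneg] <;> linarith
      · subst h
        rw [hi]
        exact Int.le_of_dvd (abs_pos.mpr hd) ((abs_dvd_abs _ _).mpr hdvd)
      · rw [hfe]; simp [y, h.not_gt, he' j h]
    · intro j h
      rw [hfe]; simp [y, h.not_gt, he' j h]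
    · intro x hx
      rw [hi]; exact hdiv x hx
  choose e he1 he2 he3 using key
  have span : ∀ k : ℕ, ∀ x : Fin N → ℤ, (∀ j : Fin N, k ≤ j.1 → f x j = 0) →
      x ∈ Submodule.span ℤ (Set.range e) := by
    intro k
    induction k with
    | zero =>
      intro x hx
      have h0 : f x = 0 := funext fun j => hx j (Nat.zero_le _)
      have := hVf x
      rw [h0, Matrix.mulVec_zero] at this
      have hx0 : x = 0 := by
        rcases smul_eq_zero.mp this.symm with h | h
        · exact absurd h hd
        · exact h
      rw [hx0]; exact zero_mem _
    | succ k ih =>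
      intro x hx
      by_cases hk : k < N
      · obtain ⟨c, hc⟩ := he3 ⟨k, hk⟩ x (fun j hj => hx j hj)
        have h1 : x - c • e ⟨k, hk⟩ ∈ Submodule.span ℤ (Set.range e) := by
          apply ih
          intro j hj
          rcases hj.eq_or_lt with h | h
          · have : j = ⟨k, hk⟩ := Fin.ext h.symm
            subst this
            rw [map_sub, map_smul, Pi.sub_apply, Pi.smul_apply, hc, smul_eq_mul]; ring
          · have h2 := he2 ⟨k, hk⟩ j h
            rw [map_sub, map_smul, Pi.sub_apply, Pi.smul_apply, h2, hx j h]; simp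
        have h2 : c • e ⟨k, hk⟩ ∈ Submodule.span ℤ (Set.range e) :=
          Submodule.smul_mem _ _ (Submodule.subset_span ⟨_, rfl⟩)
        simpa using add_mem h1 h2
      · exact ih x (fun j hj => absurd (j.2.trans_le (not_lt.mp hk)) (by omega))
  let E : Matrix (Fin N) (Fin N) ℤ := Matrix.of fun a b => e b a
  have hcol : ∀ i, E.col i = e i := fun i => rfl
  refine ⟨E, ?_, fun i j => by rw [hcol]; exact he1 i j⟩
  have hsur : ∀ x, ∃ w, E *ᵥ w = x := by
    intro x
    have h := span N x (fun j hj => absurd j.2 (by omega))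
    obtain ⟨w, hw⟩ := (Submodule.mem_span_range_iff_exists_fun ℤ).mp h
    refine ⟨w, ?_⟩
    rw [← hw]
    ext a
    simp [E, Matrix.mulVec, dotProduct, mul_comm]
  choose w hw using hsur
  have hEW : E * (Matrix.of fun a b => w (Pi.single b 1) a) = 1 := by
    ext a b
    have := congrFun (hw (Pi.single b 1)) a
    simp only [Matrix.mul_apply, Matrix.of_apply]
    simp only [Matrix.mulVec, dotProduct] at this
    rw [this, Pi.single_apply, Matrix.one_apply]
  exact Matrix.isUnit_det_of_right_inverse hEW

theorem exists_reduced_SL {N : ℕ} (hN : 0 < N) (V : Matrix (Fin N) (Fin N) ℤ) (hd : V.det ≠ 0) :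
    ∃ g : Matrix.SpecialLinearGroup (Fin N) ℤ,
      ∀ i j, |(V.adjugate *ᵥ ((g : Matrix (Fin N) (Fin N) ℤ).col i)) j| ≤ |V.det| := by
  obtain ⟨E, hE, h⟩ := exists_reduced V hd
  rcases Int.isUnit_iff.mp hE with h1 | h1
  · exact ⟨⟨E, h1⟩, h⟩
  · let i0 : Fin N := ⟨0, hN⟩
    refine ⟨⟨E.updateCol i0 ((-1 : ℤ) • E.col i0), ?_⟩, ?_⟩
    · rw [Matrix.det_updateCol_smul]
      have : E.updateCol i0 (E.col i0) = E := Matrix.updateCol_eq_self E i0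
      rw [this, h1]; norm_num
    · intro i j
      by_cases hi : i = i0
      · subst hi
        have : (E.updateCol i0 ((-1 : ℤ) • E.col i0)).col i0 = - E.col i0 := by
          ext a; simp
        show |(V.adjugate *ᵥ ((E.updateCol i0 ((-1 : ℤ) • E.col i0)).col i0)) j| ≤ _
        rw [this, Matrix.mulVec_neg, Pi.neg_apply, abs_neg]
        exact h i0 j
      · have : (E.updateCol i0 ((-1 : ℤ) • E.col i0)).col i = E.col i := by
          ext a; simp [hi]
        show |(V.adjugate *ᵥ ((E.updateCol i0 ((-1 : ℤ) • E.col i0)).col i)) j| ≤ _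
        rw [this]
        exact h i j

theorem hadamard {N : ℕ} (M : Matrix (Fin N) (Fin N) ℝ) :
    |M.det| ≤ ∏ i, ‖WithLp.toLp 2 (M.col i)‖ := by
  have : Fact (Module.finrank ℝ (EuclideanSpace ℝ (Fin N)) = N) := ⟨by simp⟩
  let b := EuclideanSpace.basisFun (Fin N) ℝ
  have h := b.toBasis.orientation.abs_volumeForm_apply_le (fun i => WithLp.toLp 2 (M.col i))
  rw [Orientation.volumeForm_robust _ b rfl, Module.Basis.det_apply] at h
  have h2 : b.toBasis.toMatrix (fun i => WithLp.toLp 2 (M.col i)) = M := by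
    ext i j; simp [Module.Basis.toMatrix_apply, b]
  rwa [h2] at h


theorem stmt_12 {N : ℕ} (hN : 2 ≤ N) (γ : ℝ)
    (hγ : IsLUB {r : ℝ | ∃ B : Matrix (Fin N) (Fin N) ℝ, B.PosDef ∧ ∃ m : ℝ,
        IsLeast {q : ℝ | ∃ v : Fin N → ℤ, v ≠ 0 ∧
          (fun i => (v i : ℝ)) ⬝ᵥ B.mulVec (fun i => (v i : ℝ)) = q} m ∧
        r = m * B.det ^ (-(1 : ℝ) / N)} γ)
    (A : Matrix (Fin N) (Fin N) ℝ) (hA : A.PosDef)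
    (hmin : IsLeast {q : ℝ | ∃ v : Fin N → ℤ, v ≠ 0 ∧
      (fun i => (v i : ℝ)) ⬝ᵥ A.mulVec (fun i => (v i : ℝ)) = q} 1)
    (hspan : Submodule.span ℝ {x : Fin N → ℝ | ∃ v : Fin N → ℤ, v ≠ 0 ∧
      (fun i => (v i : ℝ)) ⬝ᵥ A.mulVec (fun i => (v i : ℝ)) = 1 ∧
      x = fun i => (v i : ℝ)} = ⊤) :
    ∃ g : Matrix.SpecialLinearGroup (Fin N) ℤ,
      ∀ v : Fin N → ℤ, v ≠ 0 →
        (fun i => (v i : ℝ)) ⬝ᵥ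
          ((((g : Matrix (Fin N) (Fin N) ℤ).map (Int.cast : ℤ → ℝ))ᵀ * A *
            ((g : Matrix (Fin N) (Fin N) ℤ).map (Int.cast : ℤ → ℝ))).mulVec
            (fun i => (v i : ℝ))) = 1 →
        ∀ i, |(v i : ℝ)| ≤ (N : ℝ) ^ (N - 1) * γ ^ ((N : ℝ) / 2) := by
  classical
  have hN0 : 0 < N := by omega
  -- a square root of the form
  obtain ⟨B, hB⟩ : ∃ B : Matrix (Fin N) (Fin N) ℝ, A = Bᵀ * B := by
    open scoped MatrixOrder in
    obtain ⟨B, hB⟩ := CStarAlgebra.nonneg_iff_eq_star_mul_self.mp hA.posSemidef.nonneg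
    exact ⟨B, by rw [hB, Matrix.star_eq_conjTranspose, Matrix.conjTranspose_eq_transpose_of_trivial]⟩
  have hq : ∀ x : Fin N → ℝ, x ⬝ᵥ A *ᵥ x = ‖WithLp.toLp 2 (B *ᵥ x)‖ ^ 2 := by
    intro x
    rw [EuclideanSpace.real_norm_sq_eq, hB, ← Matrix.mulVec_mulVec, Matrix.dotProduct_mulVec,
      Matrix.vecMul_transpose]
    simp [dotProduct, sq]
  have hn1 : ∀ x : Fin N → ℝ, x ⬝ᵥ A *ᵥ x = 1 → ‖WithLp.toLp 2 (B *ᵥ x)‖ = 1 := by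
    intro x hx
    rw [hq] at hx
    exact (pow_eq_one_iff_of_nonneg (norm_nonneg _) two_ne_zero).mp hx
  have hdetA : A.det = B.det ^ 2 := by
    rw [hB, Matrix.det_mul, Matrix.det_transpose, sq]
  have hdpos : 0 < A.det := hA.det_pos
  have hBpos : 0 < |B.det| := by
    rw [abs_pos]; intro h; rw [hdetA, h] at hdpos; simp at hdpos
  -- the Hermite constant
  have hγ1 : A.det ^ (-(1 : ℝ) / N) ≤ γ := hγ.1 ⟨A, hA, 1, hmin, by rw [one_mul]⟩
  have hγ2 : |B.det|⁻¹ ≤ γ ^ ((N : ℝ) / 2) := by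
    have h := Real.rpow_le_rpow (Real.rpow_nonneg hdpos.le _) hγ1
      (show (0 : ℝ) ≤ (N : ℝ) / 2 by positivity)
    rw [← Real.rpow_mul hdpos.le] at h
    have hNr : (N : ℝ) ≠ 0 := by positivity
    have he : -(1 : ℝ) / N * (N / 2) = -(1 / 2) := by field_simp
    rw [he, Real.rpow_neg hdpos.le, ← Real.sqrt_eq_rpow, hdetA, Real.sqrt_sq_eq_abs] at h
    exact h
  -- independent minimal vectors
  obtain ⟨V, hVdet, hV⟩ : ∃ V : Matrix (Fin N) (Fin N) ℤ, V.det ≠ 0 ∧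
      ∀ j, ‖WithLp.toLp 2 (B *ᵥ (fun i => (V i j : ℝ)))‖ = 1 := by
    have hex := Submodule.exists_fun_fin_finrank_span_eq ℝ {x : Fin N → ℝ | ∃ v : Fin N → ℤ, v ≠ 0 ∧
      (fun i => (v i : ℝ)) ⬝ᵥ A.mulVec (fun i => (v i : ℝ)) = 1 ∧
      x = fun i => (v i : ℝ)}
    have hfr : Module.finrank ℝ (Submodule.span ℝ {x : Fin N → ℝ | ∃ v : Fin N → ℤ, v ≠ 0 ∧
      (fun i => (v i : ℝ)) ⬝ᵥ A.mulVec (fun i => (v i : ℝ)) = 1 ∧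
      x = fun i => (v i : ℝ)}) = N := by rw [hspan]; simp
    rw [hfr] at hex
    obtain ⟨f, hf, -, hli⟩ := hex
    choose v _ hv1 hv2 using hf
    refine ⟨Matrix.of fun i j => v j i, ?_, fun j => hn1 _ (hv1 j)⟩
    intro h0
    have hu : IsUnit ((Matrix.of fun i j => v j i).map (Int.cast : ℤ → ℝ)) := by
      rw [← Matrix.linearIndependent_cols_iff_isUnit]
      have hfe : ((Matrix.of fun i j => v j i).map (Int.cast : ℤ → ℝ)).col = f := by
        ext j i
        simp [hv2]
      rw [hfe]
      exact hli
    rw [Matrix.isUnit_iff_isUnit_det] at hu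
    have hm := Int.cast_det (R := ℝ) (Matrix.of fun i j => v j i)
    rw [h0] at hm
    apply hu.ne_zero
    rw [← Int.cast_zero, hm]
  obtain ⟨g, hg⟩ := exists_reduced_SL hN0 V hVdet
  refine ⟨g, ?_⟩
  set G := (g : Matrix (Fin N) (Fin N) ℤ).map (Int.cast : ℤ → ℝ) with hG
  have hGdet : G.det = 1 := by
    have hm := Int.cast_det (R := ℝ) (g : Matrix (Fin N) (Fin N) ℤ)
    rw [g.det_coe] at hm
    rw [hG, ← hm, Int.cast_one]
  -- short basis
  have hshort : ∀ k, ‖WithLp.toLp 2 ((B * G).col k)‖ ≤ N := by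
    intro k
    set c : Fin N → ℤ := V.adjugate *ᵥ ((g : Matrix (Fin N) (Fin N) ℤ).col k) with hc
    have h1 : V *ᵥ c = V.det • (g : Matrix (Fin N) (Fin N) ℤ).col k := by
      rw [hc, Matrix.mulVec_mulVec, Matrix.mul_adjugate, Matrix.smul_mulVec, Matrix.one_mulVec]
    have h2 : (V.det : ℝ) • G.col k = ∑ j, (c j : ℝ) • (fun i => (V i j : ℝ)) := by
      ext i
      have := congrArg (Int.cast : ℤ → ℝ) (congrFun h1 i)
      simp only [Matrix.mulVec, dotProduct, Pi.smul_apply, smul_eq_mul, Matrix.col_apply] at this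
      rw [Int.cast_mul, Int.cast_sum] at this
      simp only [Int.cast_mul] at this
      simp only [Pi.smul_apply, smul_eq_mul, Matrix.col_apply, hG, Matrix.map_apply,
        Finset.sum_apply]
      rw [← this]
      exact Finset.sum_congr rfl fun j _ => mul_comm _ _
    have h3 : (V.det : ℝ) • WithLp.toLp 2 ((B * G).col k) =
        ∑ j, (c j : ℝ) • WithLp.toLp 2 (B *ᵥ (fun i => (V i j : ℝ))) := by
      have hcol : (B * G).col k = B *ᵥ G.col k := by
        ext i; simp [Matrix.mul_apply, Matrix.mulVec, dotProduct]
      rw [hcol, ← WithLp.toLp_smul, ← Matrix.mulVec_smul, h2, Matrix.mulVec_sum, WithLp.toLp_sum]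
      refine Finset.sum_congr rfl fun j _ => ?_
      rw [Matrix.mulVec_smul, WithLp.toLp_smul]
    have hdp : (0 : ℝ) < |(V.det : ℝ)| := abs_pos.mpr (Int.cast_ne_zero.mpr hVdet)
    have h4 : |(V.det : ℝ)| * ‖WithLp.toLp 2 ((B * G).col k)‖ ≤ |(V.det : ℝ)| * N := by
      rw [← Real.norm_eq_abs, ← norm_smul, h3]
      refine (norm_sum_le _ _).trans ?_
      have : ∀ j ∈ Finset.univ, ‖(c j : ℝ) • WithLp.toLp 2 (B *ᵥ (fun i => (V i j : ℝ)))‖ ≤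
          |(V.det : ℝ)| := by
        intro j _
        rw [norm_smul, hV, mul_one, Real.norm_eq_abs]
        exact_mod_cast hg k j
      refine (Finset.sum_le_sum this).trans ?_
      simp [mul_comm]
    exact le_of_mul_le_mul_left h4 hdp
  intro v _ hv i
  set x : Fin N → ℝ := fun i => (v i : ℝ) with hx
  have hw : ‖WithLp.toLp 2 ((B * G) *ᵥ x)‖ = 1 := by
    rw [← Matrix.mulVec_mulVec]
    apply hn1
    rw [← hv, ← Matrix.mulVec_mulVec, ← Matrix.mulVec_mulVec, Matrix.dotProduct_mulVec x,
      Matrix.vecMul_transpose]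
  have hcr : ((B * G).updateCol i ((B * G) *ᵥ x)).det = B.det * x i := by
    rw [← Matrix.cramer_apply, Matrix.cramer_eq_adjugate_mulVec, Matrix.mulVec_mulVec,
      Matrix.adjugate_mul, Matrix.smul_mulVec, Matrix.one_mulVec, Matrix.det_mul, hGdet, mul_one]
    rfl
  have hhad := hadamard ((B * G).updateCol i ((B * G) *ᵥ x))
  rw [hcr, abs_mul, ← Finset.mul_prod_erase Finset.univ _ (Finset.mem_univ i)] at hhad
  have hci : ((B * G).updateCol i ((B * G) *ᵥ x)).col i = (B * G) *ᵥ x := by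
    ext a; simp
  rw [hci, hw, one_mul] at hhad
  have hprod : ∏ j ∈ Finset.univ.erase i,
      ‖WithLp.toLp 2 (((B * G).updateCol i ((B * G) *ᵥ x)).col j)‖ ≤ (N : ℝ) ^ (N - 1) := by
    refine (Finset.prod_le_prod (g := fun _ => (N : ℝ)) (fun j _ => norm_nonneg _) ?_).trans ?_
    · intro j hj
      have hji : ((B * G).updateCol i ((B * G) *ᵥ x)).col j = (B * G).col j := by
        ext a; simp [Finset.ne_of_mem_erase hj]
      rw [hji]; exact hshort j
    · simp
  have hfin : |x i| ≤ (N : ℝ) ^ (N - 1) * |B.det|⁻¹ := by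
    rw [← div_eq_mul_inv, le_div_iff₀ hBpos, mul_comm]
    exact hhad.trans hprod
  exact hfin.trans (mul_le_mul_of_nonneg_left hγ2 (by positivity))
end

section
/- Let (C_•, ∂) be a chain complex of free finitely generated ℤ-modules with chosen bases Σ_k of C_k, and write ∂(σ) = ∑_{σ'∈Σ_k} n_{σσ'} σ' for σ ∈ Σ_{k+1}. Let a(k) = min(card Σ_{k+1}, card Σ_k) and b(k) = max(1, sup_{σ∈Σ_{k+1}} (∑_{σ'} n_{σσ'}²)^{1/2}). Then card(H_k(C_•)_tors) ≤ b(k)^{a(k)}. -/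
open scoped BigOperators

lemma hadamard_fin (n : ℕ) (A : Matrix (Fin n) (Fin n) ℝ) :
    |A.det| ≤ ∏ i, Real.sqrt (∑ j, A i j ^ 2) := by
  let bs := EuclideanSpace.basisFun (Fin n) ℝ
  let v : Fin n → EuclideanSpace ℝ (Fin n) := fun i => WithLp.toLp 2 (A i)
  haveI : Fact (Module.finrank ℝ (EuclideanSpace ℝ (Fin n)) = n) := ⟨by simp⟩
  have h := bs.toBasis.orientation.abs_volumeForm_apply_le v
  rw [Orientation.volumeForm_robust' _ bs] at h
  have h2 : bs.toBasis.det v = A.det := by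
    rw [Module.Basis.det_apply, ← Matrix.det_transpose A]
    congr 1
  rw [h2] at h
  refine h.trans (le_of_eq ?_)
  refine Finset.prod_congr rfl fun i _ => ?_
  rw [EuclideanSpace.norm_eq]
  simp [v]

lemma hadamard_ineq {S : Type*} [Fintype S] [DecidableEq S] (A : Matrix S S ℝ) :
    |A.det| ≤ ∏ i, Real.sqrt (∑ j, A i j ^ 2) := by
  let e := (Fintype.equivFin S).symm
  have h := hadamard_fin _ (A.submatrix e e)
  rw [Matrix.det_submatrix_equiv_self] at h
  refine h.trans (le_of_eq ?_)
  rw [← e.prod_comp]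
  refine Finset.prod_congr rfl fun i _ => ?_
  rw [← e.sum_comp]
  rfl

/-- The cast from integer vectors to real vectors. -/
def castVec (S : Type*) : (S → ℤ) →ₗ[ℤ] (S → ℝ) :=
  LinearMap.compLeft (Int.castAddHom ℝ).toIntLinearMap S

lemma castVec_apply {S : Type*} (x : S → ℤ) (i : S) : castVec S x i = (x i : ℝ) := rfl

open Classical in
/-- The columns together with the standard basis vectors. -/
noncomputable def famZ {S' S : Type*} (n : S' → S → ℤ) : S' ⊕ S → S → ℤ :=
  Sum.elim n (fun j => Pi.single j 1)

lemma exists_family {S' S : Type*} [Fintype S'] [Fintype S] (n : S' → S → ℤ) :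
    ∃ f : S → S' ⊕ S, Function.Injective f ∧
      LinearIndependent ℝ (fun i => castVec S (famZ n (f i))) ∧
      ∀ σ, castVec S (n σ) ∈
        Submodule.span ℝ ((fun i => castVec S (famZ n (f i))) '' {i | (f i).isLeft}) := by
  classical
  let u : S' ⊕ S → S → ℝ := fun k => castVec S (famZ n k)
  obtain ⟨I, hI, -, hsp, hli⟩ := exists_linearIndepOn_extension (K := ℝ) (v := u)
    (s := ∅) (t := Set.range Sum.inl) (by simp) (by simp)
  obtain ⟨J, -, hIJ, hspJ, hliJ⟩ := exists_linearIndepOn_extension (K := ℝ) (v := u)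
    (s := I) (t := Set.univ) hli (by simp)
  have htop : Submodule.span ℝ (u '' J) = ⊤ := by
    rw [eq_top_iff, ← (Pi.basisFun ℝ S).span_eq, Submodule.span_le]
    rintro _ ⟨j, rfl⟩
    apply hspJ
    refine ⟨Sum.inr j, trivial, ?_⟩
    ext i
    by_cases h : i = j <;> simp [u, castVec_apply, famZ, Pi.single_apply, h]
  let B : Module.Basis J ℝ (S → ℝ) := Module.Basis.mk hliJ (by
    rw [← htop, Set.image_eq_range])
  let e : S ≃ J := (Pi.basisFun ℝ S).indexEquiv B
  refine ⟨fun i => (e i : S' ⊕ S), Subtype.val_injective.comp e.injective, ?_, ?_⟩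
  · exact LinearIndependent.comp hliJ e e.injective
  · intro σ
    have h1 : u (Sum.inl σ) ∈ Submodule.span ℝ (u '' I) := hsp ⟨_, ⟨σ, rfl⟩, rfl⟩
    refine Submodule.span_mono ?_ h1
    rintro _ ⟨k, hk, rfl⟩
    refine ⟨e.symm ⟨k, hIJ hk⟩, ?_, ?_⟩
    · obtain ⟨s, rfl⟩ := hI hk
      simp
    · simp [u]

theorem stmt_16 {S' S T : Type*} [Fintype S'] [Fintype S] [Fintype T] [DecidableEq S']
    (n : S' → S → ℤ)
    (d2 : (S' → ℤ) →ₗ[ℤ] (S → ℤ)) (hd2 : ∀ σ : S', d2 (Pi.single σ 1) = n σ)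
    (d1 : (S → ℤ) →ₗ[ℤ] (T → ℤ)) (hcc : d1 ∘ₗ d2 = 0)
    (a : ℕ) (ha : a = min (Fintype.card S') (Fintype.card S))
    (b : ℝ) (hb : b = max 1 (⨆ σ : S', Real.sqrt (∑ σ', (n σ σ' : ℝ) ^ 2))) :
    (Nat.card (Submodule.torsion ℤ
      ((LinearMap.ker d1) ⧸
        Submodule.comap (LinearMap.ker d1).subtype (LinearMap.range d2))) : ℝ)
      ≤ b ^ a := by
  classical
  obtain ⟨f, hf, hli, hspan⟩ := exists_family n
  have hliZ : LinearIndependent ℤ (fun i => famZ n (f i)) := by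
    apply LinearIndependent.of_comp (castVec S)
    exact hli.restrict_scalars' ℤ
  let N : Submodule ℤ (S → ℤ) := Submodule.span ℤ (Set.range fun i => famZ n (f i))
  let bN : Module.Basis S ℤ N := Module.Basis.span hliZ
  have hcard := Submodule.natAbs_det_basis_change (Pi.basisFun ℤ S) N bN
  have hbN : ((↑) ∘ bN : S → S → ℤ) = fun i => famZ n (f i) := by
    funext i
    exact congrArg Subtype.val (Module.Basis.span_apply hliZ i)
  rw [hbN] at hcard
  have hdet : (Pi.basisFun ℤ S).det (fun i => famZ n (f i))
      = Matrix.det (Matrix.of fun i => famZ n (f i)) := by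
    rw [Module.Basis.det_apply, ← Matrix.det_transpose (Matrix.of _)]
    congr 1
  rw [hdet] at hcard
  have hcastdet : ((Matrix.det (Matrix.of fun i => famZ n (f i)) : ℤ) : ℝ)
      = Matrix.det (Matrix.of fun i => castVec S (famZ n (f i))) := by
    rw [Int.cast_det]
    rfl
  have hne : Nat.card ((S → ℤ) ⧸ N) ≠ 0 := by
    rw [← hcard, Int.natAbs_ne_zero]
    intro h0
    rw [h0, Int.cast_zero] at hcastdet
    have := (Matrix.linearIndependent_rows_iff_isUnit
      (A := Matrix.of fun i => castVec S (famZ n (f i)))).1 hli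
    rw [Matrix.isUnit_iff_isUnit_det, ← hcastdet] at this
    simp at this
  haveI : Finite ((S → ℤ) ⧸ N) := Nat.finite_of_card_ne_zero hne
  have hb1 : 1 ≤ b := hb ▸ le_max_left _ _
  -- analytic bound
  have hbound : (Nat.card ((S → ℤ) ⧸ N) : ℝ) ≤ b ^ a := by
    rw [← hcard, Nat.cast_natAbs, Int.cast_abs, hcastdet]
    refine (hadamard_ineq _).trans ?_
    have h1 : ∀ i : S, Real.sqrt (∑ j, (Matrix.of fun i => castVec S (famZ n (f i))) i j ^ 2)
        ≤ if (f i).isLeft then b else 1 := by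
      intro i
      simp only [Matrix.of_apply, castVec_apply, famZ]
      rcases f i with σ | j
      · simp only [Sum.elim_inl, Sum.isLeft_inl, if_true]
        rw [hb]
        exact le_max_of_le_right
          (le_ciSup (f := fun σ : S' => Real.sqrt (∑ σ', (n σ σ' : ℝ) ^ 2))
            (Set.finite_range _).bddAbove σ)
      · simp [Pi.single_apply]
    refine (Finset.prod_le_prod (fun _ _ => Real.sqrt_nonneg _) fun i _ => h1 i).trans ?_
    rw [Finset.prod_ite, Finset.prod_const, Finset.prod_const_one, mul_one]
    refine pow_le_pow_right₀ hb1 ?_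
    rw [ha]
    refine le_min ?_ (Finset.card_le_univ _)
    rw [← Finset.card_image_of_injective _ hf, ← Finset.card_univ (α := S'),
      ← Finset.card_image_of_injective (Finset.univ : Finset S')
        (Sum.inl_injective (α := S') (β := S))]
    apply Finset.card_le_card
    intro k hk
    simp only [Finset.mem_image, Finset.mem_filter, Finset.mem_univ, true_and] at hk ⊢
    obtain ⟨i, hi, rfl⟩ := hk
    obtain ⟨s, hs⟩ := Sum.isLeft_iff.1 hi
    exact ⟨s, hs.symm⟩
  -- key algebraic fact
  have hrange : ∀ y ∈ LinearMap.range d2, castVec S y ∈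
      Submodule.span ℝ ((fun i => castVec S (famZ n (f i))) '' {i | (f i).isLeft}) := by
    rintro _ ⟨c, rfl⟩
    have hc : c = ∑ σ, c σ • (Pi.single σ 1 : S' → ℤ) := by
      ext s
      simp [Finset.sum_apply, Pi.single_apply]
    rw [hc, map_sum, map_sum]
    refine Submodule.sum_mem _ fun σ _ => ?_
    rw [map_smul, map_smul, hd2]
    exact zsmul_mem (hspan σ) _
  have key : ∀ x ∈ N, ∀ m : ℤ, m ≠ 0 → m • x ∈ LinearMap.range d2 →
      x ∈ LinearMap.range d2 := by
    intro x hx m hm hmx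
    obtain ⟨g, rfl⟩ := (Submodule.mem_span_range_iff_exists_fun ℤ).1 hx
    have h1 := hrange _ hmx
    rw [map_smul, map_sum] at h1
    have h2 : ∑ i, (g i : ℝ) • castVec S (famZ n (f i)) ∈
      Submodule.span ℝ ((fun i => castVec S (famZ n (f i))) '' {i | (f i).isLeft}) := by
      have h3 := Submodule.smul_mem _ ((m : ℝ)⁻¹) h1
      have hm' : (m : ℝ) ≠ 0 := by exact_mod_cast hm
      convert h3 using 1
      rw [← Int.cast_smul_eq_zsmul ℝ m, smul_smul, inv_mul_cancel₀ hm', one_smul]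
      refine Finset.sum_congr rfl fun i _ => ?_
      rw [map_smul, Int.cast_smul_eq_zsmul]
    refine Submodule.sum_mem _ fun i _ => ?_
    by_cases hi : (f i).isLeft
    · obtain ⟨s, hs⟩ := Sum.isLeft_iff.1 hi
      refine Submodule.smul_mem _ _ ⟨Pi.single s 1, ?_⟩
      rw [hs, hd2]
      rfl
    · have hgi : (g i : ℝ) = 0 := by
        rw [Finsupp.mem_span_image_iff_linearCombination] at h2
        obtain ⟨l, hl, hl2⟩ := h2
        have h4 : l = Finsupp.equivFunOnFinite.symm (fun i => (g i : ℝ)) := by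
          apply hli
          rw [hl2, Finsupp.linearCombination_apply, Finsupp.sum_fintype _ _ (by simp)]
          rfl
        have h5 : l i = 0 := by
          by_contra h
          exact hi (hl (Finsupp.mem_support_iff.2 h))
        rw [h4] at h5
        simpa using h5
      have : g i = 0 := by exact_mod_cast hgi
      rw [this, zero_smul]
      exact Submodule.zero_mem _
  -- injection
  refine le_trans ?_ hbound
  norm_cast
  let Q := (LinearMap.ker d1) ⧸
        Submodule.comap (LinearMap.ker d1).subtype (LinearMap.range d2)
  have hsurj : ∀ t : Q, ∃ x : LinearMap.ker d1, Submodule.Quotient.mk x = t :=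
    Submodule.Quotient.mk_surjective _
  choose r hr using hsurj
  refine Nat.card_le_card_of_injective
    (fun t : Submodule.torsion ℤ Q => (Submodule.Quotient.mk (r t.1 : S → ℤ) : (S → ℤ) ⧸ N)) ?_
  intro t s hts
  simp only at hts
  rw [Submodule.Quotient.eq] at hts
  obtain ⟨m, hm⟩ := (Submodule.mem_torsion_iff _).1 (t - s).2
  have h6 : (Submodule.Quotient.mk (r t.1 - r s.1) : Q) = (t - s : Submodule.torsion ℤ Q).1 := by
    rw [Submodule.Quotient.mk_sub, hr, hr]
    rfl
  have h7 : (m : ℤ) • ((r t.1 : S → ℤ) - r s.1) ∈ LinearMap.range d2 := by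
    rw [← h6] at hm
    change (m : ℤ) • (Submodule.Quotient.mk (r t.1 - r s.1) : Q) = 0 at hm
    rw [← Submodule.Quotient.mk_smul, Submodule.Quotient.mk_eq_zero] at hm
    exact hm
  have h8 := key _ hts m (nonZeroDivisors.coe_ne_zero m) h7
  apply Subtype.ext
  rw [← hr t.1, ← hr s.1, Submodule.Quotient.eq]
  exact h8
end

section
/- For a short exact sequence 0 → S → E → Q → 0 of finitely generated abelian groups with E free and the rank of S equal to t, if S is generated by elements whose Euclidean norms (for some fixed embedding E ↪ ℝ^b isometric on the standard basis) are all at most b₀ ≥ 1, then card(Q_tors) ≤ b₀^t. -/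
open scoped BigOperators

/-- The standard embedding of the integer lattice. -/
noncomputable def latEmb (b : ℕ) : (Fin b → ℤ) →ₗ[ℤ] EuclideanSpace ℝ (Fin b) where
  toFun x := WithLp.toLp 2 (fun j => (x j : ℝ))
  map_add' x y := by ext j; simp
  map_smul' n x := by ext j; simp

lemma latEmb_apply {b : ℕ} (x : Fin b → ℤ) (j : Fin b) : latEmb b x j = (x j : ℝ) := rfl

lemma latEmb_norm {b : ℕ} (x : Fin b → ℤ) :
    ‖latEmb b x‖ = Real.sqrt (∑ j, (x j : ℝ) ^ 2) := by
  rw [EuclideanSpace.norm_eq]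
  simp [latEmb_apply]

lemma hadamard_bound {b : ℕ} (v : Fin b → (Fin b → ℤ)) :
    |((Matrix.of v).det : ℝ)| ≤ ∏ i, ‖latEmb b (v i)‖ := by
  have : Fact (Module.finrank ℝ (EuclideanSpace ℝ (Fin b)) = b) := ⟨by simp⟩
  let B := EuclideanSpace.basisFun (Fin b) ℝ
  have h := B.toBasis.orientation.abs_volumeForm_apply_le (fun i => latEmb b (v i))
  rw [Orientation.volumeForm_robust' _ B] at h
  convert h using 2
  rw [Module.Basis.det_apply, ← Matrix.det_transpose]
  exact RingHom.map_det (Int.castRingHom ℝ) _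

lemma linInd_int {b : ℕ} {ι : Type*} (v : ι → (Fin b → ℤ))
    (hv : LinearIndependent ℝ (fun i => latEmb b (v i))) : LinearIndependent ℤ v := by
  have h1 : LinearIndependent ℤ (fun i => latEmb b (v i)) :=
    hv.restrict_scalars (by
      intro x y h
      simpa using h)
  exact LinearIndependent.of_comp (latEmb b) h1

lemma card_le_det {b : ℕ} (S : Submodule ℤ (Fin b → ℤ)) (v : Fin b → (Fin b → ℤ))
    (I : Set (Fin b)) (hv : LinearIndependent ℝ (fun i => latEmb b (v i)))
    (hI : ∀ i ∈ I, v i ∈ S)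
    (hS : ∀ x ∈ S, latEmb b x ∈ Submodule.span ℝ ((fun i => latEmb b (v i)) '' I)) :
    (Nat.card (Submodule.torsion ℤ ((Fin b → ℤ) ⧸ S)) : ℝ) ≤ |((Matrix.of v).det : ℝ)| := by
  have hvZ := linInd_int v hv
  let L := Submodule.span ℤ (Set.range v)
  let bL : Module.Basis (Fin b) ℤ L := Module.Basis.span hvZ
  have hcard : (Matrix.of v).det.natAbs = Nat.card ((Fin b → ℤ) ⧸ L) := by
    rw [← Submodule.natAbs_det_basis_change (Pi.basisFun ℤ (Fin b)) L bL]
    rw [Module.Basis.det_apply, ← Matrix.det_transpose]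
    congr 2
    ext i j
    have h : ((bL j : L) : Fin b → ℤ) = v j :=
      congrArg Subtype.val (Module.Basis.span_apply hvZ j)
    simp [Module.Basis.toMatrix_apply, h]
  have hdet : (Matrix.of v).det ≠ 0 := by
    intro h0
    obtain ⟨w, hw, hw0⟩ := Matrix.exists_vecMul_eq_zero_iff.2 h0
    apply hw
    funext i
    refine Fintype.linearIndependent_iff.1 hvZ w ?_ i
    rw [← hw0, Matrix.vecMul_eq_sum]
    rfl
  have : Finite ((Fin b → ℤ) ⧸ L) := by
    apply Nat.finite_of_card_ne_zero
    rw [← hcard]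
    simpa using hdet
  have key : ∀ x : Fin b → ℤ, x ∈ L → (∃ n : ℤ, n ≠ 0 ∧ n • x ∈ S) → x ∈ S := by
    rintro x hx ⟨n, hn, hnx⟩
    obtain ⟨c, rfl⟩ := (Submodule.mem_span_range_iff_exists_fun ℤ).1 hx
    have h1 := hS _ hnx
    have h2 : latEmb b (∑ i, c i • v i) ∈
        Submodule.span ℝ ((fun i => latEmb b (v i)) '' I) := by
      rw [map_smul, ← Int.cast_smul_eq_zsmul ℝ] at h1
      exact (Submodule.smul_mem_iff _ (by exact_mod_cast hn)).1 h1
    have h3 : latEmb b (∑ i, c i • v i) =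
        Finsupp.linearCombination ℝ (fun i => latEmb b (v i))
          ((Finsupp.linearEquivFunOnFinite ℝ ℝ (Fin b)).symm (fun i => (c i : ℝ))) := by
      rw [Finsupp.linearCombination_eq_fintype_linearCombination_apply ℝ]
      simp only [Fintype.linearCombination_apply, Int.cast_smul_eq_zsmul, map_sum, map_smul]
    rw [h3, Finsupp.mem_span_image_iff_linearCombination] at h2
    obtain ⟨l, hl, hl2⟩ := h2
    have h4 := hv hl2
    subst h4
    refine Submodule.sum_mem _ fun i _ => ?_
    by_cases hi : i ∈ I
    · exact S.smul_mem _ (hI i hi)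
    · have h5 : c i = 0 := by
        by_contra hc
        exact hi (hl (by simpa using hc))
      simp [h5]
  let f : Submodule.torsion ℤ ((Fin b → ℤ) ⧸ S) → (Fin b → ℤ) ⧸ L :=
    fun q => L.mkQ (Quotient.out q.1)
  have hmk : ∀ q : (Fin b → ℤ) ⧸ S, S.mkQ (Quotient.out q) = q := fun q => Quotient.out_eq _
  have hker : ∀ x, S.mkQ x = 0 ↔ x ∈ S := fun x => Submodule.Quotient.mk_eq_zero S
  have hf : Function.Injective f := by
    intro q q' h
    have h1 : Quotient.out q.1 - Quotient.out q'.1 ∈ L := (Submodule.Quotient.eq L).1 h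
    have h2 := key _ h1 (by
      obtain ⟨a, ha⟩ := (q - q').2
      refine ⟨a, nonZeroDivisors.coe_ne_zero a, ?_⟩
      rw [← hker, map_smul, map_sub, hmk, hmk]
      exact ha)
    rw [← hker, map_sub, hmk, hmk, sub_eq_zero] at h2
    exact Subtype.ext h2
  have h6 := Nat.card_le_card_of_injective f hf
  rw [← hcard] at h6
  rw [← Int.cast_abs, Int.abs_eq_natAbs]
  exact_mod_cast h6

theorem stmt_17 {b t : ℕ} (b₀ : ℝ) (hb₀ : 1 ≤ b₀)
    (S : Submodule ℤ (Fin b → ℤ))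
    (T : Set (Fin b → ℤ))
    (hTspan : Submodule.span ℤ T = S)
    (hTnorm : ∀ x ∈ T, Real.sqrt (∑ j, (x j : ℝ) ^ 2) ≤ b₀)
    (ht : Module.finrank ℤ S = t) :
    (Nat.card (Submodule.torsion ℤ ((Fin b → ℤ) ⧸ S)) : ℝ) ≤ b₀ ^ t := by
  classical
  obtain ⟨B, hBT, -, hTB, hB⟩ := exists_linearIndepOn_id_extension
    (K := ℝ) (s := (∅ : Set (EuclideanSpace ℝ (Fin b)))) (t := latEmb b '' T)
    (linearIndependent_empty _ _) (Set.empty_subset _)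
  let E : Set (EuclideanSpace ℝ (Fin b)) := Set.range (fun i => latEmb b (Pi.single i 1))
  obtain ⟨C, hCE, hBC, hEC, hC⟩ := exists_linearIndepOn_id_extension
    (K := ℝ) (s := B) (t := B ∪ E) hB Set.subset_union_left
  have hE : Submodule.span ℝ E = ⊤ := by
    rw [← (EuclideanSpace.basisFun (Fin b) ℝ).toBasis.span_eq]
    congr 1
    ext x
    simp only [E, Set.mem_range]
    refine exists_congr fun i => ?_
    have : latEmb b (Pi.single i 1) = (EuclideanSpace.basisFun (Fin b) ℝ).toBasis i := by
      ext j
      simp [latEmb_apply, Pi.single_apply]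
    rw [this]
  have hCtop : ⊤ ≤ Submodule.span ℝ (Set.range ((↑) : C → EuclideanSpace ℝ (Fin b))) := by
    rw [Subtype.range_coe, ← hE]
    exact Submodule.span_le.2 (Set.subset_union_right.trans hEC)
  let bC := Module.Basis.mk hC hCtop
  let e : Fin b ≃ C := ((EuclideanSpace.basisFun (Fin b) ℝ).toBasis.indexEquiv bC)
  have hex : ∀ i, ∃ x, latEmb b x = e i ∧ ((e i : EuclideanSpace ℝ (Fin b)) ∈ B → x ∈ T) ∧
      ((e i : EuclideanSpace ℝ (Fin b)) ∉ B → ‖latEmb b x‖ = 1) := by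
    intro i
    by_cases hi : (e i : EuclideanSpace ℝ (Fin b)) ∈ B
    · obtain ⟨x, hx, hx2⟩ := hBT hi
      exact ⟨x, hx2, fun _ => hx, fun h => absurd hi h⟩
    · obtain ⟨j, hj⟩ := (hCE (e i).2).resolve_left hi
      refine ⟨Pi.single j 1, hj, fun h => absurd h hi, fun _ => ?_⟩
      rw [latEmb_norm]
      simp [Pi.single_apply]
  choose v hv1 hv2 hv3 using hex
  have hv : LinearIndependent ℝ (fun i => latEmb b (v i)) := by
    simp_rw [hv1]
    exact hC.comp e e.injective
  let I : Finset (Fin b) := Finset.univ.filter fun i => (e i : EuclideanSpace ℝ (Fin b)) ∈ B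
  have hIS : ∀ i ∈ I, v i ∈ S := fun i hi =>
    hTspan ▸ Submodule.subset_span (hv2 i (by simpa [I] using hi))
  have hBI : B ⊆ (fun i => latEmb b (v i)) '' (I : Set (Fin b)) := by
    intro x hx
    refine ⟨e.symm ⟨x, hBC hx⟩, by simp [I, hx], ?_⟩
    simp [hv1]
  have hI : I.card ≤ t := by
    have h1 : LinearIndependent ℤ (fun i : I => (⟨v i, hIS i i.2⟩ : S)) := by
      apply LinearIndependent.of_comp S.subtype
      exact (linInd_int v hv).comp _ Subtype.val_injective
    have := h1.fintype_card_le_finrank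
    rw [ht] at this
    simpa using this
  refine (card_le_det S v I hv (fun i hi => hIS i (by simpa using hi)) ?_).trans ?_
  · intro x hx
    rw [← hTspan] at hx
    induction hx using Submodule.span_induction with
    | mem x hx => exact Submodule.span_mono hBI (hTB ⟨x, hx, rfl⟩)
    | zero => simp
    | add x y _ _ hx hy => rw [map_add]; exact Submodule.add_mem _ hx hy
    | smul n x _ hx =>
      rw [map_smul, ← Int.cast_smul_eq_zsmul ℝ]; exact Submodule.smul_mem _ _ hx
  refine (hadamard_bound v).trans ?_
  calc ∏ i, ‖latEmb b (v i)‖ ≤ ∏ i, (if i ∈ I then b₀ else 1) := by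
        refine Finset.prod_le_prod (fun _ _ => norm_nonneg _) fun i _ => ?_
        split_ifs with h
        · rw [latEmb_norm]
          exact hTnorm _ (hv2 i (by simpa [I] using h))
        · exact (hv3 i (by simpa [I] using h)).le
    _ = b₀ ^ I.card := by
        rw [Finset.prod_ite_mem]; simp
    _ ≤ b₀ ^ t := pow_le_pow_right₀ hb₀ hI
end
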